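/- arXiv:2302.07499 — 3 statements merged into one kernel-verified Lean document; each statement's English description precedes it below -/
import Mathlib

section
/- Let n ≥ 1, let μ denote Lebesgue measure on ℝⁿ (EuclideanSpace ℝ (Fin n)) and let ω_n = μ(B₁(0)) be the measure of the unit ball. Let Ω ⊆ ℝⁿ be a set, let 0 < h ≤ δ be real numbers, and let A : ℝⁿ → Set ℝⁿ be a family of sets (an 'approximate ball' family) such that for every x ∈ Ω one has B_{δ-h}(x) ⊆ A(x) ⊆ B_{δ+h}(x), where B_r(x) denotes the open Euclidean ball of radius r centered at x. Define ΔA(x) = (B_δ(x) \ A(x)) ∪ (A(x) \ B_δ(x)) and A'(x) = { y ∈ Ω : x ∈ A(y) }, ΔA'(x) = (B_δ(x) \ A'(x)) ∪ (A'(x) \ B_δ(x)). Then: (i) for every x ∈ Ω, μ(ΔA(x)) ≤ ω_n·((δ+h)ⁿ − (δ−h)ⁿ); and (ii) for every x ∈ ℝⁿ, μ(Ω ∩ ΔA'(x)) ≤ ω_n·((δ+h)ⁿ − (δ−h)ⁿ). In particular, for every x ∈ Ω, μ(ΔA(x)) + μ(Ω ∩ ΔA'(x)) ≤ 2·ω_n·((δ+h)ⁿ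 − (δ−h)ⁿ) ≤ 4·n·ω_n·h·(δ+h)^{n−1}, which is O(h·δ^{n−1}). -/
/-!
Both symmetric differences live in the shell `ball x (δ + h) \ ball x (δ - h)`: this is the sandwich
hypothesis for `ΔA x`, and for `Ω ∩ ΔA' x` it is the sandwich hypothesis at the points `y ∈ Ω`
combined with the symmetry `y ∈ ball x r ↔ x ∈ ball y r`. The shell has measure
`((δ + h) ^ n - (δ - h) ^ n) * ω_n` by scaling (`volume_shell`), and the last estimate is the mean
value bound `a ^ n - b ^ n ≤ (a - b) * n * a ^ (n - 1)` at `a = δ + h`, `b = δ - h`.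
-/

open MeasureTheory Metric


/-- The hypothesis `1 ≤ n` matters when `a = 0`, where `ball x 0 = ∅` must match `0 ^ n = 0`;
`addHaar_ball` takes care of it through the nontriviality of the space. -/
theorem volume_shell {n : ℕ} (hn : 1 ≤ n) (x : EuclideanSpace ℝ (Fin n)) {a b : ℝ}
    (ha : 0 ≤ a) (hab : a ≤ b) :
    volume (ball x b \ ball x a) =
      ENNReal.ofReal (b ^ n - a ^ n) * volume (ball (0 : EuclideanSpace ℝ (Fin n)) 1) := by
  have : Nonempty (Fin n) := ⟨⟨0, hn⟩⟩
  rw [measure_sdiff (ball_subset_ball hab) measurableSet_ball.nullMeasurableSet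
      measure_ball_lt_top.ne, Measure.addHaar_ball _ _ (ha.trans hab), Measure.addHaar_ball _ _ ha,
    finrank_euclideanSpace_fin, ENNReal.ofReal_sub _ (pow_nonneg ha n), ENNReal.sub_mul]
  exact fun _ _ => measure_ball_lt_top.ne

/-- Theorem 3.3 (normalapprox): symmetric-difference volume bound for an approximate-ball
family sandwiched between `ball x (δ-h)` and `ball x (δ+h)`. -/
theorem normalapprox (n : ℕ) (hn : 1 ≤ n)
    (Ω : Set (EuclideanSpace ℝ (Fin n)))
    (δ h : ℝ) (hh : 0 < h) (hhδ : h ≤ δ)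
    (A : EuclideanSpace ℝ (Fin n) → Set (EuclideanSpace ℝ (Fin n)))
    (hA : ∀ x ∈ Ω, ball x (δ - h) ⊆ A x ∧ A x ⊆ ball x (δ + h))
    (ΔA : EuclideanSpace ℝ (Fin n) → Set (EuclideanSpace ℝ (Fin n)))
    (hΔA : ∀ x, ΔA x = (ball x δ \ A x) ∪ (A x \ ball x δ))
    (A' : EuclideanSpace ℝ (Fin n) → Set (EuclideanSpace ℝ (Fin n)))
    (hA' : ∀ x, A' x = {y ∈ Ω | x ∈ A y})
    (ΔA' : EuclideanSpace ℝ (Fin n) → Set (EuclideanSpace ℝ (Fin n)))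
    (hΔA' : ∀ x, ΔA' x = (ball x δ \ A' x) ∪ (A' x \ ball x δ)) :
    (∀ x ∈ Ω,
      volume (ΔA x) ≤
        ENNReal.ofReal ((δ + h) ^ n - (δ - h) ^ n) *
          volume (ball (0 : EuclideanSpace ℝ (Fin n)) 1)) ∧
    (∀ x : EuclideanSpace ℝ (Fin n),
      volume (Ω ∩ ΔA' x) ≤
        ENNReal.ofReal ((δ + h) ^ n - (δ - h) ^ n) *
          volume (ball (0 : EuclideanSpace ℝ (Fin n)) 1)) ∧
    (∀ x ∈ Ω,
      volume (ΔA x) + volume (Ω ∩ ΔA' x) ≤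
        ENNReal.ofReal (2 * ((δ + h) ^ n - (δ - h) ^ n)) *
          volume (ball (0 : EuclideanSpace ℝ (Fin n)) 1)) ∧
    (ENNReal.ofReal (2 * ((δ + h) ^ n - (δ - h) ^ n)) *
        volume (ball (0 : EuclideanSpace ℝ (Fin n)) 1) ≤
      ENNReal.ofReal (4 * n * h * (δ + h) ^ (n - 1)) *
        volume (ball (0 : EuclideanSpace ℝ (Fin n)) 1)) := by
  have shell := fun x => volume_shell hn x (sub_nonneg.2 hhδ) (by linarith : δ - h ≤ δ + h)
  have h1 : ∀ x ∈ Ω, volume (ΔA x) ≤ ENNReal.ofReal ((δ + h) ^ n - (δ - h) ^ n) *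
      volume (ball (0 : EuclideanSpace ℝ (Fin n)) 1) := by
    intro x hx
    rw [← shell x, hΔA]
    obtain ⟨hl, hu⟩ := hA x hx
    refine measure_mono ?_
    rintro y (⟨hy, hy'⟩ | ⟨hy, hy'⟩)
    · exact ⟨ball_subset_ball (by linarith) hy, fun hc => hy' (hl hc)⟩
    · exact ⟨hu hy, fun hc => hy' (ball_subset_ball (by linarith) hc)⟩
  have h2 : ∀ x, volume (Ω ∩ ΔA' x) ≤ ENNReal.ofReal ((δ + h) ^ n - (δ - h) ^ n) *
      volume (ball (0 : EuclideanSpace ℝ (Fin n)) 1) := by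
    intro x
    rw [← shell x, hΔA', hA']
    refine measure_mono ?_
    rintro y ⟨hyΩ, ⟨hy, hy'⟩ | ⟨hy, hy'⟩⟩
    · exact ⟨ball_subset_ball (by linarith) hy,
        fun hc => hy' ⟨hyΩ, (hA y hyΩ).1 (mem_ball_comm.1 hc)⟩⟩
    · exact ⟨mem_ball_comm.1 ((hA y hyΩ).2 hy.2),
        fun hc => hy' (ball_subset_ball (by linarith) hc)⟩
  refine ⟨h1, h2, fun x hx => ?_, ?_⟩
  · refine (add_le_add (h1 x hx) (h2 x)).trans_eq ?_
    rw [ENNReal.ofReal_mul zero_le_two, ENNReal.ofReal_ofNat, ← two_mul, mul_assoc]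
  · gcongr ENNReal.ofReal ?_ * _
    have key := (le_abs_self _).trans (abs_pow_sub_pow_le (δ + h) (δ - h) n)
    rw [abs_of_nonneg (by linarith : 0 ≤ δ + h), abs_of_nonneg (sub_nonneg.2 hhδ),
      max_eq_left (by linarith), abs_of_nonneg (by linarith)] at key
    linear_combination 2 * key
end

section
/- Let δ > 0 and h ≥ 0 be real numbers, work in Euclidean space ℝⁿ (EuclideanSpace ℝ (Fin n)), and let S be a set of points with ‖v‖ = δ for every v ∈ S and ‖v − w‖ ≤ h for all v, w ∈ S. Then every point y in the convex hull of S satisfies ‖y‖² ≥ δ² − h²/2. Consequently, if moreover h² ≤ 2δ², then ‖y‖ ≥ δ − h²/(2δ). -/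
/-!
By polarization, two points of the sphere of radius `δ` at distance at most `h` have inner product
at least `c = δ² - h²/2`. The bound `c ≤ ⟪v, w⟫` is affine in each variable, so it passes from `S`
to `convexHull ℝ S` one variable at a time (`le_inner_of_mem_convexHull`); on the diagonal it reads
`c ≤ ‖y‖²`. The bound on `‖y‖` follows since `(δ - h²/(2δ))² ≤ δ² - h²/2` when `h² ≤ 2δ²`.
-/

open Metric

/-- A lower bound on the pairwise inner products of a set persists on its convex hull, because
closed half-spaces are convex. -/
theorem le_inner_of_mem_convexHull {E : Type*} [NormedAddCommGroup E] [InnerProductSpace ℝ E]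
    {S : Set E} {c : ℝ} (hc : ∀ v ∈ S, ∀ w ∈ S, c ≤ inner ℝ v w) :
    ∀ x ∈ convexHull ℝ S, ∀ y ∈ convexHull ℝ S, c ≤ inner ℝ x y := by
  have half_space : ∀ u : E, (∀ v ∈ S, c ≤ inner ℝ u v) →
      ∀ y ∈ convexHull ℝ S, c ≤ inner ℝ u y := fun u hu y hy =>
    convexHull_min (t := {z | c ≤ inner ℝ u z}) hu
      (convex_halfSpace_ge (innerSL ℝ u).isLinear c) hy
  intro x hx
  refine half_space x fun v hv => ?_
  rw [real_inner_comm]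
  exact half_space v (hc v hv) x hx

/-- Lemma 3.5: any convex combination of points on the sphere of radius `δ` that are
pairwise at distance at most `h` has norm squared at least `δ² - h²/2`; consequently,
if `h² ≤ 2δ²`, its norm is at least `δ - h²/(2δ)`. -/
theorem convexHull_sphere_points_norm_lower_bound (n : ℕ)
    (δ h : ℝ) (hδ : 0 < δ) (hh : 0 ≤ h)
    (S : Set (EuclideanSpace ℝ (Fin n)))
    (hS : ∀ v ∈ S, ‖v‖ = δ)
    (hSh : ∀ v ∈ S, ∀ w ∈ S, ‖v - w‖ ≤ h) :
    ∀ y ∈ convexHull ℝ S,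
      δ ^ 2 - h ^ 2 / 2 ≤ ‖y‖ ^ 2 ∧
      (h ^ 2 ≤ 2 * δ ^ 2 → δ - h ^ 2 / (2 * δ) ≤ ‖y‖) := by
  intro y hy
  have hinner : ∀ v ∈ S, ∀ w ∈ S, δ ^ 2 - h ^ 2 / 2 ≤ inner ℝ v w := by
    intro v hv w hw
    have hexp := norm_sub_sq_real v w
    rw [hS v hv, hS w hw] at hexp
    have hle := pow_le_pow_left₀ (norm_nonneg _) (hSh v hv w hw) 2
    linarith
  have hsq : δ ^ 2 - h ^ 2 / 2 ≤ ‖y‖ ^ 2 := by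
    rw [← real_inner_self_eq_norm_sq]
    exact le_inner_of_mem_convexHull hinner y hy y hy
  refine ⟨hsq, fun hle => ?_⟩
  obtain ⟨t, ht⟩ : ∃ t, t = h ^ 2 / (2 * δ) := ⟨_, rfl⟩
  have hmul : 2 * δ * t = h ^ 2 := by rw [ht]; field_simp
  have ht0 : 0 ≤ t := by rw [ht]; positivity
  have htδ : t ≤ δ := by
    rw [ht, div_le_iff₀ (by positivity)]
    linarith
  rw [← ht]
  -- `(δ - t)² = δ² - h² + t²`, and `t² ≤ tδ = h²/2`.
  exact (abs_le_of_sq_le_sq' (by nlinarith [mul_le_mul_of_nonneg_left htδ ht0])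
    (norm_nonneg y)).2
end

section
/- Let δ > 0 and h ≥ 0 with h² ≤ 2δ², and work in ℝⁿ (EuclideanSpace ℝ (Fin n)). Let x ∈ ℝⁿ and let A ⊆ ℝⁿ be a closed set with x ∈ A and A ⊆ closedBall(x, δ). Assume that every point z of the topological frontier of A lies in the convex hull of some set S_z of points satisfying ‖v − x‖ = δ for all v ∈ S_z and ‖v − w‖ ≤ h for all v, w ∈ S_z. Then the open ball B_{δ − h²/(2δ)}(x) is contained in A; in particular B_{δ − h²/(2δ)}(x) ⊆ A ⊆ closedBall(x, δ). -/
open Metric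

/-!
For two points `v`, `w` of the sphere of radius `δ` around `x` with `‖v - w‖ ≤ h`, the
polarization identity gives `⟪w - x, v - x⟫ ≥ δ² - h²/2`. Fixing `w ∈ S`, this says that `S` lies
in a half-space, hence so does its convex hull, and Cauchy–Schwarz turns this into
`‖z - x‖ ≥ δ - h²/(2δ)` for every `z` in the convex hull of `S`. Thus the frontier of `A` misses
the open ball of that radius. The ball is connected and its center lies in `A`, so it cannot leave
`A` without meeting the frontier.
-/

/-- A convex combination of pairwise `h`-close points of the sphere of radius `δ` around `x` has
distance at least `δ - h²/(2δ)` from `x`. -/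
lemma le_norm_sub_of_mem_convexHull {E : Type*} [NormedAddCommGroup E] [InnerProductSpace ℝ E]
    {δ h : ℝ} (hδ : 0 < δ) {x z : E} {S : Set E} (hz : z ∈ convexHull ℝ S)
    (hS : ∀ v ∈ S, ‖v - x‖ = δ) (hclose : ∀ v ∈ S, ∀ w ∈ S, ‖v - w‖ ≤ h) :
    δ - h ^ 2 / (2 * δ) ≤ ‖z - x‖ := by
  obtain ⟨w, hw⟩ : S.Nonempty := convexHull_nonempty_iff.mp ⟨z, hz⟩
  have hhalf : convexHull ℝ S ⊆
      {y | δ ^ 2 - h ^ 2 / 2 + inner ℝ (w - x) x ≤ inner ℝ (w - x) y} := by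
    refine convexHull_min (fun v hv => ?_)
      (convex_halfSpace_ge (innerSL ℝ (w - x)).isLinear _)
    have hpol := norm_sub_sq_real (w - x) (v - x)
    rw [sub_sub_sub_cancel_right, hS w hw, hS v hv, inner_sub_right] at hpol
    have hsq : ‖w - v‖ ^ 2 ≤ h ^ 2 := by
      gcongr
      exact hclose w hw v hv
    simp only [Set.mem_ofPred_eq]
    linarith
  have hzhalf := hhalf hz
  have hcs := real_inner_le_norm (w - x) (z - x)
  rw [hS w hw, inner_sub_right] at hcs
  simp only [Set.mem_ofPred_eq] at hzhalf
  have hscaled : δ * (δ - h ^ 2 / (2 * δ)) = δ ^ 2 - h ^ 2 / 2 := by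
    field_simp
  refine le_of_mul_le_mul_left ?_ hδ
  linarith

/-- Geometric core of Theorem 3.4 (inscribedapprox): a closed set `A` containing `x`,
contained in `closedBall x δ`, whose frontier consists of points lying in convex hulls of
`h`-close points of the sphere of radius `δ` around `x`, contains the ball
`ball x (δ - h²/(2δ))`. -/
theorem inscribed_polytope_contains_ball (n : ℕ)
    (δ h : ℝ) (hδ : 0 < δ) (hh : 0 ≤ h) (hh2 : h ^ 2 ≤ 2 * δ ^ 2)
    (x : EuclideanSpace ℝ (Fin n))
    (A : Set (EuclideanSpace ℝ (Fin n)))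
    (hAclosed : IsClosed A) (hxA : x ∈ A) (hAsub : A ⊆ closedBall x δ)
    (hfrontier : ∀ z ∈ frontier A, ∃ S : Set (EuclideanSpace ℝ (Fin n)),
      z ∈ convexHull ℝ S ∧ (∀ v ∈ S, ‖v - x‖ = δ) ∧
      (∀ v ∈ S, ∀ w ∈ S, ‖v - w‖ ≤ h)) :
    ball x (δ - h ^ 2 / (2 * δ)) ⊆ A ∧ A ⊆ closedBall x δ := by
  refine ⟨fun y hy => ?_, hAsub⟩
  by_contra hyA
  have hx : x ∈ ball x (δ - h ^ 2 / (2 * δ)) := mem_ball_self (pos_of_mem_ball hy)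
  -- On the ball the frontier is absent, so `interior A` and `Aᶜ` would be an open separation.
  have hfr : ∀ z ∈ ball x (δ - h ^ 2 / (2 * δ)), z ∉ frontier A := by
    intro z hzball hzfr
    obtain ⟨S, hzS, hS, hclose⟩ := hfrontier z hzfr
    rw [mem_ball_iff_norm] at hzball
    exact absurd hzball (le_norm_sub_of_mem_convexHull hδ hzS hS hclose).not_gt
  have hint : ∀ z ∈ ball x (δ - h ^ 2 / (2 * δ)), z ∈ A → z ∈ interior A := by
    intro z hzball hzA
    by_contra hzint
    exact hfr z hzball ⟨subset_closure hzA, hzint⟩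
  obtain ⟨z, -, hzint, hzA⟩ := (convex_ball x (δ - h ^ 2 / (2 * δ))).isPreconnected
    (interior A) Aᶜ isOpen_interior hAclosed.isOpen_compl
    (fun z hz => (em (z ∈ A)).imp (hint z hz) id) ⟨x, hx, hint x hx hxA⟩ ⟨y, hy, hyA⟩
  exact hzA (interior_subset hzint)
end
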